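/- arXiv:math/0702716 — 2 statements merged into one kernel-verified Lean document; each statement's English description precedes it below -/
import Mathlib

section
/- Let α and β be nonempty finite types, let h : α → β be an injective map, and let c : α → α → ℝ and d : β → β → ℝ be row-stochastic kernels (all values nonnegative and every row sums to 1). Assume that for all u v : α, if c u v ≠ 0 then d (h u) (h v) ≠ 0. Then for all u v : α, |c u v − d (h u) (h v)| < 1. -/
/-!
All entries lie in `[0, 1]`, so the difference can reach absolute value `1` only if one entry is `0`
and the other is `1`. If `c u v = 1`, then `d (h u) (h v) ≠ 0` by hypothesis. If `c u v = 0`, the row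
`c u` has mass at some `w ≠ v`; hence `d (h u) (h w) > 0`, and since `h w ≠ h v` by injectivity,
this leaves less than `1` for `d (h u) (h v)`.
-/

theorem stmt_0 {α β : Type*} [Fintype α] [Fintype β] [Nonempty α] [Nonempty β]
    (h : α → β) (hinj : Function.Injective h)
    (c : α → α → ℝ) (d : β → β → ℝ)
    (hc0 : ∀ u v, 0 ≤ c u v) (hc1 : ∀ u, ∑ v, c u v = 1)
    (hd0 : ∀ u v, 0 ≤ d u v) (hd1 : ∀ u, ∑ v, d u v = 1)
    (hcd : ∀ u v : α, c u v ≠ 0 → d (h u) (h v) ≠ 0) :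
    ∀ u v : α, |c u v - d (h u) (h v)| < 1 := by
  classical
  intro u v
  have hc_le : c u v ≤ 1 := by
    rw [← hc1 u]
    exact Finset.single_le_sum (fun w _ => hc0 u w) (Finset.mem_univ v)
  have hd_le : d (h u) (h v) ≤ 1 := by
    rw [← hd1 (h u)]
    exact Finset.single_le_sum (fun w _ => hd0 (h u) w) (Finset.mem_univ (h v))
  have hc_nonneg := hc0 u v
  have hd_nonneg := hd0 (h u) (h v)
  by_cases hcuv : c u v = 0
  · obtain ⟨w, -, hw⟩ : ∃ w ∈ Finset.univ, c u w ≠ 0 :=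
      Finset.exists_ne_zero_of_sum_ne_zero (by rw [hc1 u]; exact one_ne_zero)
    have hvw : h v ≠ h w := by
      intro heq
      rw [hinj heq] at hcuv
      exact hw hcuv
    have hd_pos : 0 < d (h u) (h w) := lt_of_le_of_ne (hd0 _ _) (hcd u w hw).symm
    have hpair : d (h u) (h v) + d (h u) (h w) ≤ 1 := by
      rw [← hd1 (h u), ← Finset.sum_pair hvw]
      exact Finset.sum_le_sum_of_subset_of_nonneg (Finset.subset_univ _)
        (fun x _ _ => hd0 (h u) x)
    rw [abs_lt]
    constructor <;> linarith
  · have hc_pos : 0 < c u v := lt_of_le_of_ne hc_nonneg (Ne.symm hcuv)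
    have hd_pos : 0 < d (h u) (h v) := lt_of_le_of_ne hd_nonneg (hcd u v hcuv).symm
    rw [abs_lt]
    constructor <;> linarith
end

section
/- Let α and β be nonempty finite types, let h : α → β be an injective map, and let c : α → α → ℝ and d : β → β → ℝ be row-stochastic kernels (all values nonnegative and every row sums to 1). Assume that for all u v : α, if c u v ≠ 0 then d (h u) (h v) ≠ 0. Then there exists a real number ε with 0 ≤ ε < 1 such that for all u v : α, |c u v − d (h u) (h v)| ≤ ε. -/
/-!
By finiteness it is enough to show `|c u v - d (h u) (h v)| < 1` for each pair, and both entries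
lie in `[0, 1]`. If `c u v > 0`, then `d (h u) (h v) > 0` as well, so neither difference reaches `1`.
If `c u v = 0`, row `u` of `c` has some other nonzero entry `c u w`; then `d (h u) (h w) > 0` sits
at a position different from `h v` by injectivity, which forces `d (h u) (h v) < 1`.
-/

theorem stmt_1 {α β : Type*} [Fintype α] [Fintype β] [Nonempty α] [Nonempty β]
    (h : α → β) (hinj : Function.Injective h)
    (c : α → α → ℝ) (d : β → β → ℝ)
    (hc0 : ∀ u v, 0 ≤ c u v) (hc1 : ∀ u, ∑ v, c u v = 1)
    (hd0 : ∀ u v, 0 ≤ d u v) (hd1 : ∀ u, ∑ v, d u v = 1)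
    (hcd : ∀ u v : α, c u v ≠ 0 → d (h u) (h v) ≠ 0) :
    ∃ ε : ℝ, 0 ≤ ε ∧ ε < 1 ∧ ∀ u v : α, |c u v - d (h u) (h v)| ≤ ε := by
  classical
  have key : ∀ u v : α, |c u v - d (h u) (h v)| < 1 := by
    intro u v
    have hc : c u v ≤ 1 := by
      rw [← hc1 u]
      exact Finset.single_le_sum (fun i _ => hc0 u i) (Finset.mem_univ v)
    have hd : d (h u) (h v) ≤ 1 := by
      rw [← hd1 (h u)]
      exact Finset.single_le_sum (fun i _ => hd0 (h u) i) (Finset.mem_univ (h v))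
    rw [abs_lt]
    by_cases hz : c u v = 0
    · obtain ⟨w, -, hw⟩ : ∃ w ∈ Finset.univ, c u w ≠ 0 :=
        Finset.exists_ne_zero_of_sum_ne_zero (by rw [hc1 u]; exact one_ne_zero)
      have hne : h v ≠ h w := fun e => hw (hinj e ▸ hz)
      have hpos : 0 < d (h u) (h w) := (hd0 _ _).lt_of_ne' (hcd u w hw)
      have hpair : d (h u) (h v) + d (h u) (h w) ≤ 1 := by
        rw [← hd1 (h u), ← Finset.sum_pair hne]
        exact Finset.sum_le_sum_of_subset_of_nonneg (Finset.subset_univ _)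
          (fun i _ _ => hd0 (h u) i)
      have := hd0 (h u) (h v)
      constructor <;> linarith
    · have hcpos : 0 < c u v := (hc0 u v).lt_of_ne' hz
      have hdpos : 0 < d (h u) (h v) := (hd0 _ _).lt_of_ne' (hcd u v hz)
      constructor <;> linarith
  obtain ⟨p, hp⟩ := Finite.exists_max fun p : α × α => |c p.1 p.2 - d (h p.1) (h p.2)|
  exact ⟨_, abs_nonneg _, key p.1 p.2, fun u v => hp (u, v)⟩
end
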